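/- There is a constant d > 1 such that for every real r ≥ 2 with f(r) > d² and every x ∈ c₀₀ with |||x|||_r ≠ ‖x‖_{ℓ∞}, one has |||x|||_r ≤ (1/(1 − d/√f(r))) · sup{ (1/f(ℓ)) Σ_{i=1}^ℓ |||E_i(x)|||_{r^{f(r)}} : ℓ ∈ ℕ, ℓ ≥ r, E₁ < E₂ < ⋯ < E_ℓ finite subsets of ℕ }. -/

import Mathlib

abbrev c00 : Type := ℕ →₀ ℝ

noncomputable def flog (x : ℝ) : ℝ := Real.logb 2 (x + 1)

noncomputable def supNorm (x : c00) : ℝ := ⨆ i, |x i|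

def proj (E : Finset ℕ) (x : c00) : c00 := x.filter (· ∈ E)

def FLt (A B : Finset ℕ) : Prop := ∀ a ∈ A, ∀ b ∈ B, a < b

def IsNormC00 (N : c00 → ℝ) : Prop :=
  (∀ x, N x = 0 ↔ x = 0) ∧ (∀ x y, N (x + y) ≤ N x + N y) ∧
    ∀ (a : ℝ) (x : c00), N (a • x) = |a| * N x

def schSet (N : c00 → ℝ) (x : c00) : Set ℝ :=
  {s | ∃ n : ℕ, 2 ≤ n ∧ ∃ E : Fin n → Finset ℕ,
    (∀ i j : Fin n, i < j → FLt (E i) (E j)) ∧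
    s = (flog n)⁻¹ * ∑ i, N (proj (E i) x)}

def IsSchlumprechtNorm (N : c00 → ℝ) : Prop :=
  IsNormC00 N ∧ ∀ x : c00, IsLUB (insert (supNorm x) (schSet N x)) (N x)

def IsBlockSeq (x : ℕ → c00) : Prop :=
  (∀ n, x n ≠ 0) ∧ ∀ n, ∀ i ∈ (x n).support, ∀ j ∈ (x (n+1)).support, i < j

def SeqEquiv (N : c00 → ℝ) (u v : ℕ → c00) : Prop :=
  ∃ c : ℝ, 1 ≤ c ∧ ∀ a : ℕ →₀ ℝ,
    (1 / c) * N (a.sum fun i t => t • u i) ≤ N (a.sum fun i t => t • v i) ∧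
    N (a.sum fun i t => t • v i) ≤ c * N (a.sum fun i t => t • u i)

/-- `‖x‖_ℓ` : the supremum of `(1/f(ℓ)) ∑ᵢ N(Eᵢ x)` over `E₁ < ⋯ < E_ℓ`. -/
noncomputable def normL (N : c00 → ℝ) (l : ℕ) (x : c00) : ℝ :=
  sSup {s | ∃ E : Fin l → Finset ℕ, (∀ i j : Fin l, i < j → FLt (E i) (E j)) ∧
    s = (flog l)⁻¹ * ∑ i, N (proj (E i) x)}

/-- `|||x|||_r = max(‖x‖_{ℓ∞}, sup {‖x‖_ℓ : ℓ ∈ ℕ, ℓ ≥ r})`. -/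
noncomputable def normR (N : c00 → ℝ) (r : ℝ) (x : c00) : ℝ :=
  max (supNorm x) (sSup {s | ∃ l : ℕ, r ≤ (l : ℝ) ∧ s = normL N l x})


theorem flog_one_le {x : ℝ} (hx : 1 ≤ x) : 1 ≤ flog x := by
  unfold flog
  rw [Real.le_logb_iff_rpow_le (by norm_num) (by linarith)]
  norm_num; linarith

theorem flog_mono {x y : ℝ} (hx : 0 ≤ x) (h : x ≤ y) : flog x ≤ flog y := by
  unfold flog
  exact Real.logb_le_logb_of_le (by norm_num) (by linarith) (by linarith)

theorem flog_two_le {x : ℝ} (hx : 2 ≤ x) : 3 / 2 ≤ flog x := by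
  refine le_trans ?_ (flog_mono (by norm_num) hx)
  unfold flog
  rw [Real.le_logb_iff_rpow_le (by norm_num) (by norm_num)]
  have h : ((2 : ℝ) ^ (3 / 2 : ℝ)) ^ 2 = 8 := by
    rw [← Real.rpow_natCast, ← Real.rpow_mul (by norm_num)]
    norm_num
  have h0 : (0 : ℝ) ≤ (2 : ℝ) ^ (3 / 2 : ℝ) := by positivity
  nlinarith

theorem supNorm_nonneg (x : c00) : 0 ≤ supNorm x :=
  Real.iSup_nonneg fun _ => abs_nonneg _

section
variable {N : c00 → ℝ} (hN : IsSchlumprechtNorm N)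

theorem supNorm_le_N (hN : IsSchlumprechtNorm N) (x : c00) : supNorm x ≤ N x :=
  (hN.2 x).1 (Set.mem_insert _ _)

theorem N_nonneg (hN : IsSchlumprechtNorm N) (x : c00) : 0 ≤ N x :=
  (supNorm_nonneg x).trans (supNorm_le_N hN x)

theorem sum_le_N (hN : IsSchlumprechtNorm N) (x : c00) {l : ℕ} (hl : 2 ≤ l)
    (E : Fin l → Finset ℕ) (hE : ∀ i j : Fin l, i < j → FLt (E i) (E j)) :
    (flog l)⁻¹ * ∑ i, N (proj (E i) x) ≤ N x :=
  (hN.2 x).1 (Set.mem_insert_of_mem _ ⟨l, hl, E, hE, rfl⟩)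

theorem normL_set_nonempty (N : c00 → ℝ) (x : c00) (l : ℕ) :
    {s | ∃ E : Fin l → Finset ℕ, (∀ i j : Fin l, i < j → FLt (E i) (E j)) ∧
    s = (flog l)⁻¹ * ∑ i, N (proj (E i) x)}.Nonempty :=
  ⟨_, fun _ => ∅, by intro i j _ a ha; simp at ha, rfl⟩

theorem normL_le_N (hN : IsSchlumprechtNorm N) (x : c00) {l : ℕ} (hl : 2 ≤ l) :
    normL N l x ≤ N x := by
  apply csSup_le (normL_set_nonempty N x l)
  rintro s ⟨E, hE, rfl⟩
  exact sum_le_N hN x hl E hE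

theorem le_normL (hN : IsSchlumprechtNorm N) (x : c00) {l : ℕ} (hl : 2 ≤ l)
    (E : Fin l → Finset ℕ) (hE : ∀ i j : Fin l, i < j → FLt (E i) (E j)) :
    (flog l)⁻¹ * ∑ i, N (proj (E i) x) ≤ normL N l x := by
  refine le_csSup ⟨N x, ?_⟩ ⟨E, hE, rfl⟩
  rintro s ⟨E, hE, rfl⟩
  exact sum_le_N hN x hl E hE

theorem two_le_of_cast {r : ℝ} (hr : 2 ≤ r) {l : ℕ} (h : r ≤ l) : 2 ≤ l := by
  have : (2 : ℝ) ≤ l := hr.trans h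
  exact_mod_cast this

theorem normR_set_nonempty (N : c00 → ℝ) (x : c00) (r : ℝ) :
    {s | ∃ l : ℕ, r ≤ (l : ℝ) ∧ s = normL N l x}.Nonempty :=
  ⟨_, ⌈r⌉₊, Nat.le_ceil r, rfl⟩

theorem normR_le_N (hN : IsSchlumprechtNorm N) (x : c00) {r : ℝ} (hr : 2 ≤ r) :
    normR N r x ≤ N x := by
  apply max_le (supNorm_le_N hN x)
  apply csSup_le (normR_set_nonempty N x r)
  rintro s ⟨l, hl, rfl⟩
  exact normL_le_N hN x (two_le_of_cast hr hl)

theorem normL_le_normR (hN : IsSchlumprechtNorm N) (x : c00) {r : ℝ} (hr : 2 ≤ r) {l : ℕ}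
    (hl : r ≤ l) : normL N l x ≤ normR N r x := by
  have hb : BddAbove {s | ∃ l : ℕ, r ≤ (l : ℝ) ∧ s = normL N l x} := by
    refine ⟨N x, ?_⟩
    rintro s ⟨l, hl, rfl⟩
    exact normL_le_N hN x (two_le_of_cast hr hl)
  exact le_trans (le_csSup hb ⟨l, hl, rfl⟩) (le_max_right _ _)

theorem normR_nonneg (N : c00 → ℝ) (x : c00) (r : ℝ) : 0 ≤ normR N r x :=
  (supNorm_nonneg x).trans (le_max_left _ _)

theorem sum_le_normR (hN : IsSchlumprechtNorm N) (x : c00) {r : ℝ} (hr : 2 ≤ r)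
    {ι : Type} [Fintype ι] [LinearOrder ι] (hl : r ≤ (Fintype.card ι : ℝ))
    (E : ι → Finset ℕ) (hE : ∀ i j : ι, i < j → FLt (E i) (E j)) :
    ∑ i, N (proj (E i) x) ≤ flog (Fintype.card ι) * normR N r x := by
  let e := Fintype.orderIsoFinOfCardEq ι rfl
  have h := (le_normL hN x (two_le_of_cast hr hl) (fun i => E (e i))
    (fun i j hij => hE _ _ (e.lt_iff_lt.2 hij))).trans (normL_le_normR hN x hr hl)
  have h1 : ∑ i, N (proj (E (e i)) x) = ∑ i, N (proj (E i) x) :=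
    e.toEquiv.sum_comp (fun i => N (proj (E i) x))
  have hf := flog_two_le (hr.trans hl)
  rw [h1, inv_mul_le_iff₀ (by linarith)] at h
  exact h

theorem proj_proj (A B : Finset ℕ) (x : c00) : proj A (proj B x) = proj (A ∩ B) x := by
  ext i
  simp only [proj, Finsupp.filter_apply, Finset.mem_inter]
  split_ifs <;> tauto

theorem refine_le (hN : IsSchlumprechtNorm N) (x : c00) {r : ℝ} (hr : 2 ≤ r) {l : ℕ}
    (hl : r ≤ l) (E : Fin l → Finset ℕ) (hE : ∀ i j : Fin l, i < j → FLt (E i) (E j))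
    {β : ℝ} (hβ : 1 ≤ β) (c : Fin l → ℝ)
    (h : ∀ i, ∃ m : ℕ, 1 ≤ m ∧ flog m ≤ β ∧ ∃ G : Fin m → Finset ℕ,
      (∀ j k : Fin m, j < k → FLt (G j) (G k)) ∧
      N (proj (E i) x) + c i ≤ ∑ j, N (proj (G j) (proj (E i) x))) :
    ∑ i, (N (proj (E i) x) + c i) ≤ (flog l + β) * normR N r x := by
  choose m hm1 hmβ G hG hs using h
  have hcard : Fintype.card (Σₗ i : Fin l, Fin (m i)) = ∑ i, m i := by
    rw [← Fintype.card_congr (toLex (α := Σ i : Fin l, Fin (m i)))]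
    simp
  have hlow : l ≤ ∑ i, m i := by
    calc l = ∑ i : Fin l, 1 := by simp
      _ ≤ _ := Finset.sum_le_sum fun i _ => hm1 i
  have hlow' : (l : ℝ) ≤ ((∑ i, m i : ℕ) : ℝ) := by exact_mod_cast hlow
  have key := sum_le_normR hN x hr (ι := Σₗ i : Fin l, Fin (m i))
    (by rw [hcard]; exact hl.trans hlow')
    (fun p => G (ofLex p).1 (ofLex p).2 ∩ E (ofLex p).1) (by
      intro p q hpq a ha b hb
      rw [Finset.mem_inter] at ha hb
      rw [Sigma.Lex.lt_def] at hpq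
      rcases hpq with h | ⟨h, h'⟩
      · exact hE _ _ h a ha.2 b hb.2
      · obtain ⟨i, j⟩ := p
        obtain ⟨i', j'⟩ := q
        obtain rfl : i = i' := h
        exact hG i j j' h' a ha.1 b hb.1)
  rw [hcard] at key
  have hsum : ∑ p : (Σₗ i : Fin l, Fin (m i)),
      N (proj (G (ofLex p).1 (ofLex p).2 ∩ E (ofLex p).1) x)
      = ∑ i, ∑ j, N (proj (G i j) (proj (E i) x)) := by
    rw [← (toLex (α := Σ i : Fin l, Fin (m i))).sum_comp, Fintype.sum_sigma]
    simp [proj_proj]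
  rw [hsum] at key
  have hf : flog ((∑ i, m i : ℕ) : ℝ) ≤ flog l + β := by
    have hb : ∀ i, ((m i : ℕ) : ℝ) ≤ 2 ^ β := by
      intro i
      have := hmβ i
      unfold flog at this
      rw [Real.logb_le_iff_le_rpow (by norm_num) (by positivity)] at this
      linarith
    have h1 : ((∑ i, m i : ℕ) : ℝ) ≤ l * 2 ^ β := by
      push_cast
      calc ∑ i, ((m i : ℕ) : ℝ) ≤ ∑ i : Fin l, (2 : ℝ) ^ β := Finset.sum_le_sum fun i _ => hb i
        _ = _ := by simp
    have h2 : (1 : ℝ) ≤ 2 ^ β := Real.one_le_rpow (by norm_num) (by linarith)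
    unfold flog
    rw [Real.logb_le_iff_le_rpow (by norm_num) (by positivity), Real.rpow_add (by norm_num),
      Real.rpow_logb (by norm_num) (by norm_num) (by positivity)]
    nlinarith
  calc _ ≤ _ := Finset.sum_le_sum fun i _ => hs i
    _ ≤ _ := key
    _ ≤ _ := mul_le_mul_of_nonneg_right hf (normR_nonneg N x r)

/-- `y` is `δ`-almost normed by a family of `n` sets with `α ≤ f(n) ≤ β`. -/
def Scale (N : c00 → ℝ) (δ α β : ℝ) (y : c00) : Prop :=
  ∃ n : ℕ, 2 ≤ n ∧ α ≤ flog n ∧ flog n ≤ β ∧ ∃ G : Fin n → Finset ℕ,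
    (∀ j k : Fin n, j < k → FLt (G j) (G k)) ∧
    flog n * (N y - δ) ≤ ∑ j, N (proj (G j) y)

open Classical in
theorem scale_bound (hN : IsSchlumprechtNorm N) (x : c00) {r : ℝ} (hr : 2 ≤ r) {l : ℕ}
    (hl : r ≤ l) (E : Fin l → Finset ℕ) (hE : ∀ i j : Fin l, i < j → FLt (E i) (E j))
    {α β δ η : ℝ} (hβ : 1 ≤ β) (hδ : 0 ≤ δ) (hη : l * δ = η)
    (hA : flog l * (normR N r x - η) ≤ ∑ i, N (proj (E i) x)) :
    (α - 1) * ∑ i, (if Scale N δ α β (proj (E i) x) then N (proj (E i) x) else 0)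
      ≤ β * normR N r x + (flog l + β) * η := by
  have h := refine_le hN x hr hl E hE hβ
    (fun i => (α - 1) * (if Scale N δ α β (proj (E i) x) then N (proj (E i) x) else 0) - β * δ)
    (by
      intro i
      by_cases hi : Scale N δ α β (proj (E i) x)
      · obtain ⟨n, hn, h1, h2, G, hG, h3⟩ := hi
        refine ⟨n, by omega, h2, G, hG, le_trans ?_ h3⟩
        have := N_nonneg hN (proj (E i) x)
        have hi : Scale N δ α β (proj (E i) x) := ⟨n, hn, h1, h2, G, hG, h3⟩
        simp only [hi, if_true]
        nlinarith
      · refine ⟨1, le_rfl, ?_, fun _ => E i, ?_, ?_⟩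
        · unfold flog; norm_num; exact hβ
        · intro j k hjk; exact absurd hjk (by omega)
        · simp only [hi, if_false]
          rw [Fin.sum_univ_one, proj_proj, Finset.inter_self]
          nlinarith)
  rw [Finset.sum_add_distrib, Finset.sum_sub_distrib, ← Finset.mul_sum] at h
  simp only [Finset.sum_const, Finset.card_univ, Fintype.card_fin, nsmul_eq_mul] at h
  have : (l : ℝ) * (β * δ) = β * η := by rw [← hη]; ring
  linarith

end

set_option maxHeartbeats 2000000 in
/-- Lemma 2.6: there is `d > 1` so that for all real `r ≥ 2` with
`f(r) > d²` and all `x ∈ c₀₀` with `|||x|||_r ≠ ‖x‖_{ℓ∞}`, the norm `|||x|||_r` is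
bounded by `(1 - d/√f(r))⁻¹` times the supremum of
`(1/f(ℓ)) ∑ᵢ |||Eᵢ(x)|||_{r^{f(r)}}` over `ℓ ≥ r` and `E₁ < ⋯ < E_ℓ`. -/
theorem character_lemma
    (N : c00 → ℝ) (hN : IsSchlumprechtNorm N) :
    ∃ d : ℝ, 1 < d ∧ ∀ r : ℝ, 2 ≤ r → d ^ 2 < flog r →
      ∀ x : c00, normR N r x ≠ supNorm x →
        normR N r x ≤ (1 - d / Real.sqrt (flog r))⁻¹ *
          sSup {s | ∃ l : ℕ, r ≤ (l : ℝ) ∧ ∃ E : Fin l → Finset ℕ,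
            (∀ i j : Fin l, i < j → FLt (E i) (E j)) ∧
            s = (flog l)⁻¹ * ∑ i, normR N (r ^ flog r) (proj (E i) x)} := by
  classical
  refine ⟨8, by norm_num, ?_⟩
  intro r hr hF x hx
  set F := flog r with hFdef
  set s := Real.sqrt F with hs
  have hF0 : 0 ≤ F := by linarith
  have hss : s * s = F := Real.mul_self_sqrt hF0
  have hs8 : 8 < s := by
    rw [hs]; exact Real.lt_sqrt_of_sq_lt hF
  set R := r ^ F with hR
  have hF1 : 1 ≤ F := by linarith
  have hR2 : 2 ≤ R := hr.trans (Real.self_le_rpow_of_one_le (by linarith) hF1)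
  set T : Set ℝ := {s | ∃ l : ℕ, r ≤ (l : ℝ) ∧ ∃ E : Fin l → Finset ℕ,
            (∀ i j : Fin l, i < j → FLt (E i) (E j)) ∧
            s = (flog l)⁻¹ * ∑ i, normR N R (proj (E i) x)} with hT
  have hTb : BddAbove T := by
    refine ⟨N x, ?_⟩
    rintro t ⟨l, hl, E, hE, rfl⟩
    refine le_trans ?_ (sum_le_N hN x (two_le_of_cast hr hl) E hE)
    have := flog_two_le (hr.trans hl)
    exact mul_le_mul_of_nonneg_left (Finset.sum_le_sum fun i _ => normR_le_N hN _ hR2)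
      (inv_nonneg.2 (by linarith))
  set A := normR N r x with hA
  have hA0 : 0 ≤ A := normR_nonneg N x r
  have hd : 0 < 1 - 8 / s := by
    have : 8 / s < 1 := by rw [div_lt_one (by linarith)]; exact hs8
    linarith
  rw [← div_eq_inv_mul, le_div_iff₀ hd]
  have hAe : A = sSup {s | ∃ l : ℕ, r ≤ (l : ℝ) ∧ s = normL N l x} := by
    rcases max_choice (supNorm x) (sSup {s | ∃ l : ℕ, r ≤ (l : ℝ) ∧ s = normL N l x}) with h | h
    · exact absurd h hx
    · exact h
  suffices H : ∀ η : ℝ, 0 < η → A * (1 - 8 / s) ≤ sSup T + 18 * η by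
    apply le_of_forall_pos_le_add
    intro ε hε
    have := H (ε / 18) (by positivity)
    linarith
  intro η hη
  obtain ⟨_, ⟨l, hl, rfl⟩, h1⟩ := exists_lt_of_lt_csSup (normR_set_nonempty N x r)
    (show A - η < _ by rw [← hAe]; linarith)
  obtain ⟨_, ⟨E, hE, rfl⟩, h2⟩ := exists_lt_of_lt_csSup (normL_set_nonempty N x l) h1
  have hl2 : (2 : ℝ) ≤ l := hr.trans hl
  have hfl : F ≤ flog l := flog_mono (by linarith) hl
  have hflp : 0 < flog l := by linarith
  rw [← div_eq_inv_mul, lt_div_iff₀ hflp, mul_comm] at h2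
  set δ := η / l with hδ
  have hδ0 : 0 < δ := by positivity
  have hlδ : l * δ = η := by rw [hδ]; field_simp
  have hRlog : ∀ n : ℕ, (n : ℝ) < R → flog n ≤ s ^ 4 := by
    intro n hn
    have e4 : s ^ 4 = F * F := by rw [← hss]; ring
    rw [e4]
    unfold flog
    rw [Real.logb_le_iff_le_rpow (by norm_num) (by positivity), Real.rpow_mul (by norm_num)]
    have : (2 : ℝ) ^ F = r + 1 := by
      rw [hFdef]; unfold flog
      exact Real.rpow_logb (by norm_num) (by norm_num) (by linarith)
    rw [this]
    have := Real.add_rpow_le_rpow_add (show (0 : ℝ) ≤ r by linarith) zero_le_one hF1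
    rw [Real.one_rpow] at this
    linarith
  let I (α β : ℝ) (i : Fin l) : ℝ :=
    if Scale N δ α β (proj (E i) x) then N (proj (E i) x) else 0
  have hI0 : ∀ α β i, 0 ≤ I α β i := by
    intro α β i
    simp only [I]
    split_ifs
    · exact N_nonneg hN _
    · exact le_rfl
  have hpt : ∀ i, N (proj (E i) x) ≤ normR N R (proj (E i) x) + δ + I (3 / 2) s i
      + I s (s ^ 2) i + I (s ^ 2) (s ^ 3) i + I (s ^ 3) (s ^ 4) i := by
    intro i
    have p1 := hI0 (3 / 2) s i
    have p2 := hI0 s (s ^ 2) i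
    have p3 := hI0 (s ^ 2) (s ^ 3) i
    have p4 := hI0 (s ^ 3) (s ^ 4) i
    have p0 := normR_nonneg N (proj (E i) x) R
    by_cases hg : N (proj (E i) x) - δ ≤ normR N R (proj (E i) x)
    · linarith
    push Not at hg
    obtain ⟨t, ht, ht1⟩ := (lt_isLUB_iff (hN.2 (proj (E i) x))).1
      (show N (proj (E i) x) - δ < N (proj (E i) x) by linarith)
    rcases ht with rfl | ⟨n, hn, G, hG, rfl⟩
    · exact absurd (lt_trans hg ht1) (not_lt.2 (le_max_left _ _))
    have ha : N (proj (E i) x) - δ ≤ (flog n)⁻¹ * ∑ j, N (proj (G j) (proj (E i) x)) := ht1.le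
    have hn2 : (2 : ℝ) ≤ n := by exact_mod_cast hn
    have hfn := flog_two_le hn2
    rw [← div_eq_inv_mul, le_div_iff₀ (by linarith), mul_comm] at ha
    have hnR : (n : ℝ) < R := by
      by_contra hc
      push Not at hc
      have := (le_normL hN (proj (E i) x) hn G hG).trans (normL_le_normR hN _ hR2 hc)
      linarith
    have hn4 := hRlog n hnR
    have mk : ∀ α β, α ≤ flog n → flog n ≤ β → I α β i = N (proj (E i) x) := by
      intro α β h1 h2
      exact if_pos ⟨n, hn, h1, h2, G, hG, ha⟩
    rcases le_total (flog n) s with q1 | q1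
    · rw [mk (3 / 2) s hfn q1] at *; linarith
    rcases le_total (flog n) (s ^ 2) with q2 | q2
    · rw [mk s (s ^ 2) q1 q2] at *; linarith
    rcases le_total (flog n) (s ^ 3) with q3 | q3
    · rw [mk (s ^ 2) (s ^ 3) q2 q3] at *; linarith
    · rw [mk (s ^ 3) (s ^ 4) q3 hn4] at *; linarith
  have hsum := Finset.sum_le_sum fun i (_ : i ∈ Finset.univ) => hpt i
  simp only [Finset.sum_add_distrib] at hsum
  have hδs : ∑ i : Fin l, δ = η := by simp [hlδ]
  rw [hδs] at hsum
  have hgood : ∑ i, normR N R (proj (E i) x) ≤ flog l * sSup T := by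
    have : (flog l)⁻¹ * ∑ i, normR N R (proj (E i) x) ≤ sSup T :=
      le_csSup hTb ⟨l, hl, E, hE, rfl⟩
    rwa [inv_mul_le_iff₀ hflp] at this
  have hsF : s ≤ flog l := by nlinarith
  have hsc : ∀ α, 1 ≤ α → 1 / 2 * α ≤ α - 1 → ∑ i, I α (α * s) i ≤ 2 * s * A + 4 * flog l * η := by
    intro α h1 h2'
    have hb := scale_bound hN x hr hl E hE (α := α) (β := α * s) (by nlinarith) hδ0.le hlδ h2.le
    have hnn : 0 ≤ ∑ i, I α (α * s) i := Finset.sum_nonneg fun i _ => hI0 _ _ i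
    have hb' : (α - 1) * ∑ i, I α (α * s) i ≤ α * s * A + (flog l + α * s) * η := hb
    have h3 : 1 / 2 * α * ∑ i, I α (α * s) i ≤ α * s * A + (flog l + α * s) * η :=
      (mul_le_mul_of_nonneg_right h2' hnn).trans hb'
    have h4 : flog l + α * s ≤ α * (2 * flog l) := by nlinarith
    have h5 : (flog l + α * s) * η ≤ α * (2 * flog l) * η := mul_le_mul_of_nonneg_right h4 hη.le
    have h6 : α * ∑ i, I α (α * s) i ≤ α * (2 * s * A + 4 * flog l * η) := by linarith
    exact le_of_mul_le_mul_left h6 (by linarith)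
  have b1 : ∑ i, I (3 / 2) s i ≤ 2 * s * A + 4 * flog l * η := by
    have hb : (3 / 2 - 1) * ∑ i, I (3 / 2) s i ≤ s * A + (flog l + s) * η :=
      scale_bound hN x hr hl E hE (by linarith) hδ0.le hlδ h2.le
    have : s * η ≤ flog l * η := mul_le_mul_of_nonneg_right hsF hη.le
    linarith
  have hs2 : 2 ≤ s ^ 2 := by nlinarith
  have hs3 : 2 ≤ s ^ 3 := by nlinarith
  have b2 := hsc s (by linarith) (by linarith)
  have b3 := hsc (s ^ 2) (by linarith) (by linarith)
  have b4 := hsc (s ^ 3) (by linarith) (by linarith)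
  rw [← pow_two] at b2
  rw [← pow_succ] at b3 b4
  have htot : flog l * (A - η) ≤ flog l * sSup T + η + 8 * s * A + 16 * flog l * η := by
    linarith
  have hη' : η ≤ flog l * η := by nlinarith
  have hsA : s * A ≤ flog l * (A / s) := by
    have hsp : 0 < s := by linarith
    have : s * A = s * s * (A / s) := by field_simp
    rw [this, hss]
    exact mul_le_mul_of_nonneg_right hfl (by positivity)
  have e : A * (1 - 8 / s) = A - 8 * (A / s) := by ring
  rw [e]
  refine le_of_mul_le_mul_left ?_ hflp
  linarith
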